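/- arXiv:math/0005217 — 2 statements merged into one kernel-verified Lean document; each statement's English description precedes it below -/
import Mathlib

section
/- In the formal power series ring ℤ⟦t⟦, one has (∑_{k=0}^∞ (dim_ℂ M_k) t^k) · (1 − t⁴) · (1 − t⁶) = 1; equivalently, the generating function of the dimensions of the spaces of level-one modular forms is 1/((1−t⁴)(1−t⁶)). (This is Proposition 2(a) in generating-function form.) -/
/-!
For even `k ≥ 4` the Eisenstein series `E_k` spans a complement of the cusp forms in `M_k`, and
division by the discriminant `Δ` identifies the cusp forms with `M_{k-12}`. Together with `M_0 = ℂ`,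
`M_2 = 0` and the vanishing in odd weight this gives `dim M_k = dim M_{k-12} + 1` for every even
`k ≥ 0` other than `2`, and `dim M_k = dim M_{k-12}` for the remaining `k ≥ 0`. The generating
function `F` therefore satisfies `F · (1 - t¹²) = 1 / (1 - t²) - t²`, which gives the
product formula because `(1 - t² + t⁴)(1 - t⁴)(1 - t⁶) = (1 - t²)(1 - t¹²)`.
-/

open scoped MatrixGroups

section GeometricSeries

open PowerSeries

variable {R : Type*}

lemma mk_mul_one_sub_X_pow [Ring R] {a : ℤ → R} (ha : ∀ m < 0, a m = 0) (n : ℕ) :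
    (mk fun k : ℕ ↦ a k) * (1 - X ^ n) = mk fun k : ℕ ↦ a k - a (k - n) := by
  ext k
  simp only [mul_sub, mul_one, map_sub, coeff_mk, coeff_mul_X_pow']
  split_ifs with hnk
  · rw [Nat.cast_sub hnk]
  · rw [ha (k - n) (by lia)]

lemma mk_ite_dvd_mul_one_sub_X_pow [CommRing R] {d : ℕ} (hd : d ≠ 0) :
    (mk fun k ↦ if d ∣ k then (1 : R) else 0) * (1 - X ^ d) = 1 := by
  have h_expand : (mk fun k ↦ if d ∣ k then (1 : R) else 0) = expand d hd (mk 1) := by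
    ext k
    simp [coeff_expand]
  rw [h_expand, ← expand_X d hd, ← map_one (expand d hd), ← map_sub, ← map_mul,
    mk_one_mul_one_sub_eq_one]

lemma isUnit_one_sub_X_pow [CommRing R] {d : ℕ} (hd : d ≠ 0) : IsUnit (1 - X ^ d : R⟦X⟧) :=
  .of_mul_eq_one_right _ (mk_ite_dvd_mul_one_sub_X_pow hd)

end GeometricSeries

section Dimension

open Module

lemma finrank_modularForm_congr {Γ Γ' : Subgroup (GL (Fin 2) ℝ)} [Γ.HasDetOne] [Γ'.HasDetOne]
    (h : Γ = Γ') (k : ℤ) : finrank ℂ (ModularForm Γ k) = finrank ℂ (ModularForm Γ' k) := by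
  subst h
  rfl

lemma finrank_levelOne_of_neg {k : ℤ} (hk : k < 0) : finrank ℂ (ModularForm 𝒮ℒ k) = 0 :=
  finrank_eq_of_rank_eq (mod_cast ModularForm.levelOne_neg_weight_rank_zero hk)

lemma finrank_levelOne_of_odd {k : ℤ} (hk : Odd k) : finrank ℂ (ModularForm 𝒮ℒ k) = 0 :=
  finrank_eq_of_rank_eq (mod_cast ModularForm.levelOne_odd_weight_rank_zero hk)

lemma finrank_levelOne_eq_finrank_sub_twelve_add_one {k : ℕ} (hk : 3 ≤ k) (hk_even : Even k) :
    finrank ℂ (ModularForm 𝒮ℒ k) = finrank ℂ (ModularForm 𝒮ℒ ((k : ℤ) - 12)) + 1 := by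
  have h_rank : Module.rank ℂ (ModularForm 𝒮ℒ k) =
      1 + Module.rank ℂ (ModularForm 𝒮ℒ ((k : ℤ) - 12)) := by
    rw [ModularForm.rank_eq_one_add_rank_cuspForm hk hk_even,
      CuspForm.discriminantEquiv.rank_eq]
  rw [← finrank_eq_rank, ← finrank_eq_rank] at h_rank
  rw [add_comm]
  exact_mod_cast h_rank

lemma finrank_levelOne_eq_finrank_sub_twelve_add_ite (k : ℕ) :
    finrank ℂ (ModularForm 𝒮ℒ k) =
      finrank ℂ (ModularForm 𝒮ℒ ((k : ℤ) - 12)) + if Even k ∧ k ≠ 2 then 1 else 0 := by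
  rcases Nat.even_or_odd k with hk_even | hk_odd
  · obtain rfl | rfl | hk : k = 0 ∨ k = 2 ∨ 3 ≤ k := by grind
    · have h_zero : finrank ℂ (ModularForm 𝒮ℒ 0) = 1 :=
        finrank_eq_of_rank_eq (mod_cast ModularForm.levelOne_weight_zero_rank_one)
      simpa [finrank_levelOne_of_neg] using h_zero
    · have h_two : finrank ℂ (ModularForm 𝒮ℒ 2) = 0 :=
        finrank_eq_of_rank_eq (mod_cast ModularForm.levelOne_weight_two_rank_zero)
      simpa [finrank_levelOne_of_neg] using h_two
    · rw [if_pos ⟨hk_even, by lia⟩, finrank_levelOne_eq_finrank_sub_twelve_add_one hk hk_even]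
  · have hk_odd' : Odd (k : ℤ) := mod_cast hk_odd
    rw [finrank_levelOne_of_odd hk_odd', finrank_levelOne_of_odd (hk_odd'.sub_even (by decide)),
      if_neg fun h ↦ Nat.not_even_iff_odd.mpr hk_odd h.1]

end Dimension

lemma mk_finrank_levelOne_mul_one_sub_X_pow_twelve :
    (PowerSeries.mk fun k : ℕ ↦ (Module.finrank ℂ (ModularForm 𝒮ℒ k) : ℤ)) *
        (1 - PowerSeries.X ^ 12) =
      (PowerSeries.mk fun k ↦ if 2 ∣ k then 1 else 0) - PowerSeries.X ^ 2 := by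
  rw [mk_mul_one_sub_X_pow (a := fun m ↦ (Module.finrank ℂ (ModularForm 𝒮ℒ m) : ℤ))
    (fun m hm ↦ mod_cast finrank_levelOne_of_neg hm)]
  ext k
  rw [map_sub, PowerSeries.coeff_X_pow, PowerSeries.coeff_mk, PowerSeries.coeff_mk,
    finrank_levelOne_eq_finrank_sub_twelve_add_ite]
  grind

/-- **Generating function of dimensions of level-one modular forms** (Proposition 2(a)):
in `ℤ⟦t⟧` one has `(∑ₖ dim_ℂ M_k · tᵏ) · (1 − t⁴) · (1 − t⁶) = 1`, i.e. the generating
function of the dimensions of the spaces of modular forms for the full modular group is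
`1 / ((1 − t⁴)(1 − t⁶))`. -/
theorem modularForm_dim_generating_function :
    (PowerSeries.mk fun k : ℕ =>
        (Module.finrank ℂ (ModularForm (CongruenceSubgroup.Gamma 1) (k : ℤ)) : ℤ)) *
      (1 - PowerSeries.X ^ 4) * (1 - PowerSeries.X ^ 6) = 1 := by
  simp only [finrank_modularForm_congr CongruenceSubgroup.Gamma_one_coe_eq_SL]
  have h_even := mk_ite_dvd_mul_one_sub_X_pow (R := ℤ) two_ne_zero
  have h_twelve := mk_finrank_levelOne_mul_one_sub_X_pow_twelve
  refine (isUnit_one_sub_X_pow (R := ℤ) (d := 12) (by norm_num)).mul_right_cancel ?_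
  linear_combination (1 - PowerSeries.X ^ 4) * (1 - PowerSeries.X ^ 6) * h_twelve +
    (1 + PowerSeries.X ^ 2) * (1 - PowerSeries.X ^ 6) * h_even
end

section
/- Define m : ℤ → ℤ by m(k) = dim_ℂ M_k for k ≥ 0, and m(k) = −dim_ℂ M_{−k−10} for k < 0 (these latter spaces have negative weight −k−10 when −10 < k < 0, so that m(k) = 0 for −10 < k < 0, and m(−10) = −1). Then the formal power series F(q,r) := ∑_{a,b ≥ 0} m(b − a) q^a r^b in ℤ⟦q,r⟧ satisfies F(q,r) · (1 − qr)(1 − q⁴)(1 − q⁶)(1 − r⁴)(1 − r⁶) = (1 − q⁴)(1 − q⁶) − q^{10}(1 − r⁴)(1 − r⁶). (This expresses the Corollary χ(M̄_{1,1}, 1/((1−qL₁^{−1})(1−q₁L₁))) = (1/(1−qq₁))·(1/((1−q₁⁴)(1−q₁⁶)) − q^{10}/((1−q⁴)(1−q⁶))) through the identification of the Euler characteristics χ(M̄_{1,1}, L₁^k) with dimensions of spaces of level-one modular forms.) -/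
open MvPowerSeries

/-!
Let `H = ∑ (dim Mₙ) Xⁿ`, so that `H · (1 - X⁴)(1 - X⁶) = 1`. Multiplying a series whose `qᵃ rᵇ`
coefficient depends only on `b - a` by `1 - q r` leaves only its terms on the two coordinate axes.
For `F` the axis `a = 0` carries `H(r)`, and, by the duality `m (-k) = -dim M_{k - 10}`, the axis
`b = 0` carries `-q¹⁰ H(q)`. Hence `F · (1 - q r) = H(r) - q¹⁰ H(q)`.
-/

open scoped MatrixGroups

section LevelOneDimension

/-- The dimension of the space of level-one modular forms of weight `k`, as an integer so that
alternating sums of dimensions can be formed. -/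
noncomputable def levelOneDim (k : ℤ) : ℤ :=
  Module.finrank ℂ (ModularForm (CongruenceSubgroup.Gamma 1) k)

lemma finrank_modularForm_congr_s4 (k : ℤ) {G H : Subgroup (GL (Fin 2) ℝ)} [G.HasDetOne]
    [H.HasDetOne] (h : G = H) :
    Module.finrank ℂ (ModularForm G k) = Module.finrank ℂ (ModularForm H k) := by
  subst h
  rfl

lemma levelOneDim_eq_of_rank_eq {k : ℤ} {d : ℕ} (h : Module.rank ℂ (ModularForm 𝒮ℒ k) = d) :
    levelOneDim k = d := by
  rw [levelOneDim, finrank_modularForm_congr_s4 k CongruenceSubgroup.Gamma_one_coe_eq_SL,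
    Module.finrank_eq_of_rank_eq h]

lemma levelOneDim_of_neg {k : ℤ} (hk : k < 0) : levelOneDim k = 0 :=
  levelOneDim_eq_of_rank_eq (d := 0) (mod_cast ModularForm.levelOne_neg_weight_rank_zero hk)

lemma levelOneDim_of_odd {k : ℤ} (hk : Odd k) : levelOneDim k = 0 :=
  levelOneDim_eq_of_rank_eq (d := 0) (mod_cast ModularForm.levelOne_odd_weight_rank_zero hk)

lemma levelOneDim_of_even {k : ℤ} (hk : 0 ≤ k) (heven : Even k) :
    levelOneDim k = if k % 12 = 2 then k / 12 else k / 12 + 1 := by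
  lift k to ℕ using hk
  have hrank := ModularForm.dimension_level_one k (mod_cast heven)
  have hmod : k ≡ 2 [MOD 12] ↔ (k : ℤ) % 12 = 2 := by
    rw [Nat.ModEq]
    omega
  simp only [hmod] at hrank
  split_ifs at hrank ⊢
  · exact_mod_cast levelOneDim_eq_of_rank_eq hrank
  · exact_mod_cast levelOneDim_eq_of_rank_eq (d := k / 12 + 1) (mod_cast hrank)

lemma levelOneDim_eq_ite (k : ℤ) :
    levelOneDim k =
      if 0 ≤ k ∧ k % 2 = 0 then (if k % 12 = 2 then k / 12 else k / 12 + 1) else 0 := by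
  by_cases hk : 0 ≤ k ∧ k % 2 = 0
  · rw [if_pos hk, levelOneDim_of_even hk.1 (Int.even_iff.mpr hk.2)]
  · rw [if_neg hk]
    rcases lt_or_ge k 0 with hneg | hnonneg
    · exact levelOneDim_of_neg hneg
    · exact levelOneDim_of_odd (Int.odd_iff.mpr (by omega))

lemma levelOneDim_recurrence (k : ℤ) :
    levelOneDim k - levelOneDim (k - 4) - levelOneDim (k - 6) + levelOneDim (k - 10) =
      if k = 0 then 1 else 0 := by
  simp only [levelOneDim_eq_ite]
  split_ifs <;> omega

end LevelOneDimension

section HilbertSeries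

lemma mk_mul_X_pow_of_forall_neg_eq_zero {R : Type*} [Semiring R] {c : ℤ → R}
    (hc : ∀ k < 0, c k = 0) (d : ℕ) :
    PowerSeries.mk (fun n ↦ c n) * PowerSeries.X ^ d = PowerSeries.mk fun n ↦ c (n - d) := by
  ext n
  rw [PowerSeries.coeff_mul_X_pow', PowerSeries.coeff_mk, PowerSeries.coeff_mk]
  split_ifs with h
  · rw [Nat.cast_sub h]
  · exact (hc _ (by omega)).symm

/-- The Hilbert series `∑ (dim Mₙ) Xⁿ` of the graded ring of level-one modular forms. -/
noncomputable def levelOneHilbertSeries : PowerSeries ℤ :=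
  PowerSeries.mk fun n ↦ levelOneDim n

lemma levelOneHilbertSeries_mul_X_pow (d : ℕ) :
    levelOneHilbertSeries * PowerSeries.X ^ d = PowerSeries.mk fun n ↦ levelOneDim (n - d) :=
  mk_mul_X_pow_of_forall_neg_eq_zero (fun _ ↦ levelOneDim_of_neg) d

theorem levelOneHilbertSeries_mul_eq_one :
    levelOneHilbertSeries * ((1 - PowerSeries.X ^ 4) * (1 - PowerSeries.X ^ 6)) = 1 := by
  have hexpand : levelOneHilbertSeries * ((1 - PowerSeries.X ^ 4) * (1 - PowerSeries.X ^ 6)) =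
      levelOneHilbertSeries - levelOneHilbertSeries * PowerSeries.X ^ 4 -
        levelOneHilbertSeries * PowerSeries.X ^ 6 + levelOneHilbertSeries * PowerSeries.X ^ 10 := by
    ring
  ext n
  rw [hexpand]
  simp only [levelOneHilbertSeries_mul_X_pow, map_add, map_sub]
  simpa [levelOneHilbertSeries, PowerSeries.coeff_one] using levelOneDim_recurrence n

end HilbertSeries

section InVariable

variable {σ R : Type*} [CommSemiring R]

/-- The substitution `X ↦ X i`, viewing a power series in one variable as a power series in the
`i`-th variable of a family indexed by `σ`. -/
noncomputable def inVariable (i : σ) : PowerSeries R →ₐ[R] MvPowerSeries σ R :=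
  rename fun _ : Unit ↦ i

@[simp]
lemma inVariable_X (i : σ) : inVariable i (PowerSeries.X : PowerSeries R) = X i :=
  rename_X _ _

lemma coeff_inVariable [DecidableEq σ] (i : σ) (p : PowerSeries R) (x : σ →₀ ℕ) :
    coeff x (inVariable i p) =
      if x = Finsupp.single i (x i) then PowerSeries.coeff (x i) p else 0 := by
  split_ifs with hx
  · let e : Unit ↪ σ := ⟨fun _ ↦ i, Function.injective_of_subsingleton _⟩
    have h := coeff_embDomain_rename e p (Finsupp.single () (x i))
    rw [Finsupp.embDomain_single] at h
    rw [hx]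
    simpa using! h
  · refine coeff_rename_eq_zero _ p ?_
    rintro ⟨y, rfl⟩
    apply hx
    rw [Finsupp.unique_single y, Finsupp.mapDomain_single, Finsupp.single_eq_same]

lemma inVariable_levelOneHilbertSeries_mul_eq_one (i : σ) :
    inVariable i levelOneHilbertSeries * ((1 - X i ^ 4) * (1 - X i ^ 6)) = 1 := by
  simpa using congrArg (inVariable i) levelOneHilbertSeries_mul_eq_one

end InVariable

section TwoVariables

variable {R : Type*}

lemma ext_coeff_single_add_single [Semiring R] {F G : MvPowerSeries (Fin 2) R}
    (h : ∀ a b : ℕ, coeff (Finsupp.single 0 a + Finsupp.single 1 b) F =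
      coeff (Finsupp.single 0 a + Finsupp.single 1 b) G) : F = G := by
  ext x
  have hx : x = Finsupp.single 0 (x 0) + Finsupp.single 1 (x 1) := by
    ext i
    fin_cases i <;> simp
  rw [hx]
  exact h _ _

lemma coeff_mul_X_mul_X [Semiring R] (F : MvPowerSeries (Fin 2) R) (a b : ℕ) :
    coeff (Finsupp.single 0 a + Finsupp.single 1 b) (F * (X 0 * X 1)) =
      if 1 ≤ a ∧ 1 ≤ b then coeff (Finsupp.single 0 (a - 1) + Finsupp.single 1 (b - 1)) F
      else 0 := by
  have hX : (X 0 * X 1 : MvPowerSeries (Fin 2) R) =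
      monomial (Finsupp.single 0 1 + Finsupp.single 1 1) 1 := by
    simp [X, monomial_mul_monomial]
  have hsub : (Finsupp.single 0 a + Finsupp.single 1 b -
      (Finsupp.single 0 1 + Finsupp.single 1 1) : Fin 2 →₀ ℕ) =
      Finsupp.single 0 (a - 1) + Finsupp.single 1 (b - 1) := by
    ext i
    fin_cases i <;> simp
  rw [hX, coeff_mul_monomial, hsub, mul_one]
  simp [Finsupp.le_def, Fin.forall_fin_two]

theorem mul_one_sub_X_mul_X_of_coeff_eq [CommRing R] {c : ℤ → R} {F : MvPowerSeries (Fin 2) R}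
    (hF : ∀ a b : ℕ, coeff (Finsupp.single 0 a + Finsupp.single 1 b) F = c (b - a)) :
    F * (1 - X 0 * X 1) = inVariable 1 (PowerSeries.mk fun n ↦ c n) +
      inVariable 0 (PowerSeries.mk (fun n ↦ c (-(n + 1))) * PowerSeries.X) := by
  refine ext_coeff_single_add_single fun a b ↦ ?_
  rw [mul_sub, mul_one, map_sub, map_add, coeff_mul_X_mul_X, coeff_inVariable, coeff_inVariable]
  simp only [hF]
  rcases a with _ | a <;> rcases b with _ | b <;>
    simp [Finsupp.ext_iff, Fin.forall_fin_two, PowerSeries.coeff_succ_mul_X]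

end TwoVariables

/-- **Corollary (via modular forms)**: let `m k = dim_ℂ M_k` for `k ≥ 0` (the space of
level-one modular forms of weight `k`) and `m k = -dim_ℂ M_{-k-10}` for `k < 0`.  If
`F = ∑_{a,b ≥ 0} m (b - a) qᵃ rᵇ` in `ℤ⟦q,r⟧` (with `q = X 0`, `r = X 1`), then
`F · (1 − qr)(1 − q⁴)(1 − q⁶)(1 − r⁴)(1 − r⁶) = (1 − q⁴)(1 − q⁶) − q¹⁰ (1 − r⁴)(1 − r⁶)`.
This expresses `χ(M̄₁,₁, 1/((1−qL₁⁻¹)(1−q₁L₁)))`. -/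
theorem corollary_modular_forms (m : ℤ → ℤ)
    (hm_nonneg : ∀ k : ℤ, 0 ≤ k →
      m k = Module.finrank ℂ (ModularForm (CongruenceSubgroup.Gamma 1) k))
    (hm_neg : ∀ k : ℤ, k < 0 →
      m k = -(Module.finrank ℂ (ModularForm (CongruenceSubgroup.Gamma 1) (-k - 10)) : ℤ))
    (F : MvPowerSeries (Fin 2) ℤ)
    (hF : ∀ a b : ℕ,
      MvPowerSeries.coeff (Finsupp.single 0 a + Finsupp.single 1 b) F = m ((b : ℤ) - a)) :
    F * ((1 - X 0 * X 1) * ((1 - X 0 ^ 4) * ((1 - X 0 ^ 6) *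
        ((1 - X 1 ^ 4) * (1 - X 1 ^ 6))))) =
      (1 - X 0 ^ 4) * (1 - X 0 ^ 6) - X 0 ^ 10 * ((1 - X 1 ^ 4) * (1 - X 1 ^ 6)) := by
  change ∀ k : ℤ, 0 ≤ k → m k = levelOneDim k at hm_nonneg
  change ∀ k : ℤ, k < 0 → m k = -levelOneDim (-k - 10) at hm_neg
  have hpos : (PowerSeries.mk fun n ↦ m n) = levelOneHilbertSeries := by
    ext n
    simp [levelOneHilbertSeries, hm_nonneg]
  have hneg : (PowerSeries.mk fun n ↦ m (-(n + 1))) =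
      -(levelOneHilbertSeries * PowerSeries.X ^ 9) := by
    ext n
    rw [levelOneHilbertSeries_mul_X_pow, map_neg, PowerSeries.coeff_mk, PowerSeries.coeff_mk,
      hm_neg _ (by omega), show -(-(n + 1 : ℤ)) - 10 = n - (9 : ℕ) by omega]
  have hdiag : F * (1 - X 0 * X 1) = inVariable 1 levelOneHilbertSeries -
      X 0 ^ 10 * inVariable 0 levelOneHilbertSeries := by
    rw [mul_one_sub_X_mul_X_of_coeff_eq hF, hpos, hneg]
    simp only [map_mul, map_neg, map_pow, inVariable_X]
    ring
  linear_combination (1 - X 0 ^ 4) * (1 - X 0 ^ 6) * (1 - X 1 ^ 4) * (1 - X 1 ^ 6) * hdiag +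
    (1 - X 0 ^ 4) * (1 - X 0 ^ 6) * inVariable_levelOneHilbertSeries_mul_eq_one (1 : Fin 2) -
    X 0 ^ 10 * (1 - X 1 ^ 4) * (1 - X 1 ^ 6) *
      inVariable_levelOneHilbertSeries_mul_eq_one (0 : Fin 2)
end
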